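/- Let 1 ≤ p < ∞. Then the norm of the point evaluation functional δ_z on the derivative Hardy space S^p is comparable to 1 uniformly in z: there exist constants c, C > 0 independent of z ∈ 𝔻 such that c ≤ sup{|f(z)| : f ∈ S^p, ‖f‖_{S^p} ≤ 1} ≤ C for all z ∈ 𝔻. -/

import Mathlib

open MeasureTheory Metric Set Filter Topology ENNReal

noncomputable section

/-- The open unit disk in ℂ. -/
def unitDisk : Set ℂ := Metric.ball (0 : ℂ) 1

/-- The normalized Lebesgue measure on the unit circle, parameterized by the angle
`θ ∈ (0, 2π]`. -/
def circleMeasure : Measure ℝ :=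
  (ENNReal.ofReal (2 * Real.pi)⁻¹) • (volume.restrict (Set.Ioc 0 (2 * Real.pi)))

/-- `∫_{∂𝔻} |f(r ξ)|^p dm(ξ)`, as an extended nonnegative real. -/
def hardyLintegral (p : ℝ) (f : ℂ → ℂ) (r : ℝ) : ℝ≥0∞ :=
  ∫⁻ θ, ENNReal.ofReal (‖f ((r : ℂ) * Complex.exp ((θ : ℂ) * Complex.I))‖ ^ p) ∂circleMeasure

/-- `sup_{0 ≤ r < 1} ∫_{∂𝔻} |f(r ξ)|^p dm(ξ)`. -/
def hardySup (p : ℝ) (f : ℂ → ℂ) : ℝ≥0∞ :=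
  ⨆ r : Set.Ico (0 : ℝ) 1, hardyLintegral p f r

/-- Membership in the derivative Hardy space `S^p`: analytic on 𝔻 with `f' ∈ H^p`. -/
def MemS (p : ℝ) (f : ℂ → ℂ) : Prop :=
  DifferentiableOn ℂ f unitDisk ∧ hardySup p (deriv f) < ⊤

/-- The norm of the derivative Hardy space `S^p`: `|f(0)| + ‖f'‖_{H^p}`. -/
def sNorm (p : ℝ) (f : ℂ → ℂ) : ℝ :=
  ‖f 0‖ + ((hardySup p (deriv f)).toReal) ^ (1 / p)

/-!
Since `m` is a probability measure, `‖f'‖_{H^1} ≤ ‖f'‖_{H^p}` for `p ≥ 1`. The oscillation of `f` on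
the circle `|w| = |z|` is at most its total variation there, hence at most `2π ‖f'‖_{H^1}`; by the
maximum principle applied to `f - f(z)`, this controls `|f(0) - f(z)|` as well. Constant functions
give the lower bound.
-/

section Oscillation

variable {E : Type*} [NormedAddCommGroup E]

theorem norm_sub_le_abs_integral_norm_of_hasDerivAt [NormedSpace ℝ E] [CompleteSpace E]
    {g g' : ℝ → E} {a b s t : ℝ} (hg : ∀ x ∈ uIcc a b, HasDerivAt g (g' x) x)
    (hg' : IntervalIntegrable g' volume a b) (hs : s ∈ uIcc a b) (ht : t ∈ uIcc a b) :
    ‖g t - g s‖ ≤ |∫ x in a..b, ‖g' x‖| := by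
  have hst : uIcc s t ⊆ uIcc a b := uIcc_subset_uIcc hs ht
  have hst' : uIoc s t ⊆ uIoc a b := uIoc_subset_uIoc_of_uIcc_subset_uIcc hst
  calc ‖g t - g s‖ = ‖∫ x in s..t, g' x‖ := by
        rw [intervalIntegral.integral_eq_sub_of_hasDerivAt (fun x hx ↦ hg x (hst hx))
          (hg'.mono_set hst)]
    _ ≤ |∫ x in s..t, ‖g' x‖| := intervalIntegral.norm_integral_le_abs_integral_norm
    _ ≤ |∫ x in a..b, ‖g' x‖| :=
        intervalIntegral.abs_integral_mono_interval hst'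
          (Eventually.of_forall fun x ↦ norm_nonneg (g' x)) hg'.norm

variable [NormedSpace ℂ E] [CompleteSpace E] {f : ℂ → E} {c z w : ℂ} {R : ℝ}

theorem norm_sub_le_circleAverage_norm_deriv (hf : AnalyticOnNhd ℂ f (sphere c |R|))
    (hz : z ∈ sphere c |R|) (hw : w ∈ sphere c |R|) :
    ‖f z - f w‖ ≤ 2 * Real.pi * |R| * Real.circleAverage (fun ζ ↦ ‖deriv f ζ‖) c R := by
  have hmem (θ : ℝ) : circleMap c R θ ∈ sphere c |R| := circleMap_mem_sphere' c R θ
  have hderiv (θ : ℝ) : HasDerivAt (fun θ ↦ f (circleMap c R θ))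
      ((circleMap 0 R θ * Complex.I) • deriv f (circleMap c R θ)) θ :=
    (hf _ (hmem θ)).differentiableAt.hasDerivAt.scomp θ (hasDerivAt_circleMap c R θ)
  have hcont : Continuous fun θ ↦ (circleMap 0 R θ * Complex.I) • deriv f (circleMap c R θ) :=
    ((continuous_circleMap 0 R).mul continuous_const).smul
      (hf.deriv.continuousOn.comp_continuous (continuous_circleMap c R) hmem)
  have hangle : ∀ ζ ∈ sphere c |R|, ∃ θ ∈ uIcc 0 (2 * Real.pi), circleMap c R θ = ζ := by
    intro ζ hζ
    rw [← image_circleMap_Ioc] at hζ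
    obtain ⟨θ, hθ, rfl⟩ := hζ
    exact ⟨θ, Icc_subset_uIcc (Ioc_subset_Icc_self hθ), rfl⟩
  obtain ⟨α, hα, rfl⟩ := hangle z hz
  obtain ⟨β, hβ, rfl⟩ := hangle w hw
  calc ‖f (circleMap c R α) - f (circleMap c R β)‖
      ≤ |∫ θ in 0..2 * Real.pi, ‖(circleMap 0 R θ * Complex.I) • deriv f (circleMap c R θ)‖| :=
        norm_sub_le_abs_integral_norm_of_hasDerivAt (fun θ _ ↦ hderiv θ)
          (hcont.intervalIntegrable _ _) hβ hα
    _ = ∫ θ in 0..2 * Real.pi, |R| * ‖deriv f (circleMap c R θ)‖ := by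
        simp only [norm_smul, norm_mul, Complex.norm_I, mul_one, norm_circleMap_zero]
        exact abs_of_nonneg <| intervalIntegral.integral_nonneg Real.two_pi_pos.le
          fun θ _ ↦ by positivity
    _ = 2 * Real.pi * |R| * Real.circleAverage (fun ζ ↦ ‖deriv f ζ‖) c R := by
        rw [intervalIntegral.integral_const_mul, Real.circleAverage_def, smul_eq_mul]
        field_simp

theorem norm_sub_center_le_circleAverage_norm_deriv
    (hf : AnalyticOnNhd ℂ f (closedBall c (dist z c))) :
    ‖f z - f c‖ ≤
      2 * Real.pi * dist z c * Real.circleAverage (fun ζ ↦ ‖deriv f ζ‖) c (dist z c) := by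
  rcases eq_or_ne z c with rfl | hzc
  · simp
  have hR : dist z c ≠ 0 := dist_ne_zero.2 hzc
  have habs : |dist z c| = dist z c := abs_of_nonneg dist_nonneg
  have hdiff : DiffContOnCl ℂ (fun ζ ↦ f ζ - f z) (ball c (dist z c)) := by
    apply DifferentiableOn.diffContOnCl
    rw [closure_ball c hR]
    exact hf.differentiableOn.sub_const (f z)
  rw [norm_sub_rev]
  refine Complex.norm_le_of_forall_mem_frontier_norm_le isBounded_ball hdiff (fun ζ hζ ↦ ?_)
    (subset_closure (mem_ball_self (dist_pos.2 hzc)))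
  rw [frontier_ball c hR, ← habs] at hζ
  have hosc := norm_sub_le_circleAverage_norm_deriv (z := ζ) (w := z)
    (hf.mono (habs.symm ▸ sphere_subset_closedBall)) hζ (habs.symm ▸ rfl)
  rwa [habs] at hosc

end Oscillation

section HardyMeans

instance isProbabilityMeasure_circleMeasure : IsProbabilityMeasure circleMeasure where
  measure_univ := by
    rw [circleMeasure, Measure.smul_apply, Measure.restrict_apply_univ, Real.volume_Ioc, sub_zero,
      smul_eq_mul, ← ENNReal.ofReal_mul (by positivity), inv_mul_cancel₀ Real.two_pi_pos.ne',
      ENNReal.ofReal_one]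

theorem integral_circleMap_circleMeasure {E : Type*} [NormedAddCommGroup E] [NormedSpace ℝ E]
    (f : ℂ → E) (r : ℝ) :
    ∫ θ, f (circleMap 0 r θ) ∂circleMeasure = Real.circleAverage f 0 r := by
  rw [circleMeasure, integral_smul_measure, ENNReal.toReal_ofReal (by positivity),
    Real.circleAverage_def, intervalIntegral.integral_of_le Real.two_pi_pos.le]

variable {p r : ℝ} {f : ℂ → ℂ}

theorem hardyLintegral_rpow_one_div (hp : 0 ≤ p) :
    hardyLintegral p f r ^ (1 / p) = eLpNorm' (fun θ ↦ f (circleMap 0 r θ)) p circleMeasure := by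
  simp only [hardyLintegral, eLpNorm', circleMap_zero, ← ofReal_norm,
    ENNReal.ofReal_rpow_of_nonneg (norm_nonneg _) hp]

theorem hardyLintegral_le_hardySup (hr : r ∈ Ico 0 1) :
    hardyLintegral p f r ≤ hardySup p f :=
  le_iSup (fun s : Ico (0 : ℝ) 1 ↦ hardyLintegral p f s) ⟨r, hr⟩

theorem circleAverage_norm_le_hardySup_rpow (hp : 1 ≤ p) (hf : ContinuousOn f unitDisk)
    (hfin : hardySup p f < ⊤) (hr : r ∈ Ico 0 1) :
    Real.circleAverage (fun ζ ↦ ‖f ζ‖) 0 r ≤ (hardySup p f).toReal ^ (1 / p) := by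
  have hp0 : 0 ≤ p := zero_le_one.trans hp
  have hmem (θ : ℝ) : circleMap 0 r θ ∈ unitDisk := by
    simpa [unitDisk, abs_of_nonneg hr.1] using hr.2
  have hmeas : AEStronglyMeasurable (fun θ ↦ f (circleMap 0 r θ)) circleMeasure :=
    (hf.comp_continuous (continuous_circleMap 0 r) hmem).aestronglyMeasurable
  have hmean : ∫⁻ θ, ‖f (circleMap 0 r θ)‖ₑ ∂circleMeasure ≤ hardySup p f ^ (1 / p) :=
    calc ∫⁻ θ, ‖f (circleMap 0 r θ)‖ₑ ∂circleMeasure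
        = eLpNorm' (fun θ ↦ f (circleMap 0 r θ)) 1 circleMeasure := by
          simp only [eLpNorm', ENNReal.rpow_one, div_one]
      _ ≤ eLpNorm' (fun θ ↦ f (circleMap 0 r θ)) p circleMeasure :=
          eLpNorm'_le_eLpNorm'_of_exponent_le zero_lt_one hp circleMeasure hmeas
      _ = hardyLintegral p f r ^ (1 / p) := (hardyLintegral_rpow_one_div hp0).symm
      _ ≤ hardySup p f ^ (1 / p) :=
          ENNReal.rpow_le_rpow (hardyLintegral_le_hardySup hr) (by positivity)
  rw [← integral_circleMap_circleMeasure, integral_norm_eq_lintegral_enorm hmeas,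
    ENNReal.toReal_rpow]
  exact ENNReal.toReal_mono (ENNReal.rpow_ne_top_of_nonneg (by positivity) hfin.ne) hmean

theorem MemS.norm_sub_apply_zero_le (hp : 1 ≤ p) (hf : MemS p f) {z : ℂ} (hz : z ∈ unitDisk) :
    ‖f z - f 0‖ ≤ 2 * Real.pi * (hardySup p (deriv f)).toReal ^ (1 / p) := by
  have hz1 : dist z 0 < 1 := hz
  have hf_an : AnalyticOnNhd ℂ f unitDisk := hf.1.analyticOnNhd isOpen_ball
  calc ‖f z - f 0‖
      ≤ 2 * Real.pi * dist z 0 * Real.circleAverage (fun ζ ↦ ‖deriv f ζ‖) 0 (dist z 0) :=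
        norm_sub_center_le_circleAverage_norm_deriv (hf_an.mono (closedBall_subset_ball hz1))
    _ ≤ 2 * Real.pi * dist z 0 * (hardySup p (deriv f)).toReal ^ (1 / p) := by
        gcongr
        exact circleAverage_norm_le_hardySup_rpow hp hf_an.deriv.continuousOn hf.2
          ⟨dist_nonneg, hz1⟩
    _ ≤ 2 * Real.pi * (hardySup p (deriv f)).toReal ^ (1 / p) :=
        mul_le_mul_of_nonneg_right (mul_le_of_le_one_right Real.two_pi_pos.le hz1.le)
          (by positivity)

theorem MemS.norm_apply_le_two_pi_mul_sNorm (hp : 1 ≤ p) (hf : MemS p f) {z : ℂ}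
    (hz : z ∈ unitDisk) :
    ‖f z‖ ≤ 2 * Real.pi * sNorm p f := by
  have hpi : 1 ≤ 2 * Real.pi := by linarith [Real.pi_gt_three]
  calc ‖f z‖ ≤ ‖f 0‖ + ‖f z - f 0‖ := norm_le_norm_add_norm_sub' _ _
    _ ≤ 2 * Real.pi * ‖f 0‖ + 2 * Real.pi * (hardySup p (deriv f)).toReal ^ (1 / p) :=
        add_le_add (le_mul_of_one_le_left (norm_nonneg _) hpi) (hf.norm_sub_apply_zero_le hp hz)
    _ = 2 * Real.pi * sNorm p f := by rw [sNorm, mul_add]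

end HardyMeans

section Constants

variable {p : ℝ}

theorem hardySup_deriv_const (hp : p ≠ 0) (a : ℂ) : hardySup p (deriv fun _ ↦ a) = 0 := by
  simp [hardySup, hardyLintegral, Real.zero_rpow hp]

theorem memS_const (hp : p ≠ 0) (a : ℂ) : MemS p fun _ ↦ a :=
  ⟨differentiableOn_const a, hardySup_deriv_const hp a ▸ ENNReal.zero_lt_top⟩

theorem sNorm_const (hp : p ≠ 0) (a : ℂ) : sNorm p (fun _ ↦ a) = ‖a‖ := by
  rw [sNorm, hardySup_deriv_const hp, ENNReal.toReal_zero, Real.zero_rpow (one_div_ne_zero hp),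
    add_zero]

end Constants

/-- Lemma 3.1(2): for `1 ≤ p < ∞`, the point evaluation functional on `S^p` satisfies
`‖δ_z‖ ≍ 1` uniformly in `z`. -/
theorem pointEval_Sp_large (p : ℝ) (hp : 1 ≤ p) :
    ∃ c C : ℝ, 0 < c ∧ 0 < C ∧ ∀ z ∈ unitDisk,
      c ≤ sSup {r : ℝ | ∃ f : ℂ → ℂ, MemS p f ∧ sNorm p f ≤ 1 ∧ r = ‖f z‖} ∧
      sSup {r : ℝ | ∃ f : ℂ → ℂ, MemS p f ∧ sNorm p f ≤ 1 ∧ r = ‖f z‖} ≤ C := by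
  refine ⟨1, 2 * Real.pi, one_pos, Real.two_pi_pos, fun z hz ↦ ?_⟩
  have hp0 : p ≠ 0 := (zero_lt_one.trans_le hp).ne'
  set S := {r : ℝ | ∃ f : ℂ → ℂ, MemS p f ∧ sNorm p f ≤ 1 ∧ r = ‖f z‖}
  have hupper : ∀ r ∈ S, r ≤ 2 * Real.pi := by
    rintro _ ⟨f, hf, hnorm, rfl⟩
    exact (hf.norm_apply_le_two_pi_mul_sNorm hp hz).trans
      (mul_le_of_le_one_right Real.two_pi_pos.le hnorm)
  have hone : 1 ∈ S := ⟨fun _ ↦ 1, memS_const hp0 1, by simp [sNorm_const hp0], by simp⟩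
  exact ⟨le_csSup ⟨_, hupper⟩ hone, csSup_le ⟨1, hone⟩ hupper⟩
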